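/- Let n ≥ 1 and s > 1. Then there exists a pair (f_0,f_1) with f_0 ∈ H¹(ℝⁿ), f_1 ∈ L²(ℝⁿ) belonging to the Gevrey class 𝒢^s — i.e. there exists η > 0 with ∫_{ℝⁿ} ( |ξ|² |f̂_0(ξ)|² + |f̂_1(ξ)|² ) e^{η |ξ|^{1/s}} dξ < ∞ — which does not belong to Manfrin's class ℬ_Δ: for every sequence ρ_j > 0 with ρ_j → ∞ and every η' > 0, sup_{j∈ℕ} ∫_{|ξ| ≥ ρ_j} ( |ξ|⁴ |f̂_0(ξ)|² + |ξ|² |f̂_1(ξ)|² ) e^{η' ρ_j² / |ξ|} / ρ_j² dξ = ∞ (or f_0 ∉ H²(ℝⁿ) or f_1 ∉ H¹(ℝⁿ)). -/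

import Mathlib

open MeasureTheory Filter
open scoped ENNReal NNReal

noncomputable section

/-! Taking `f₀ = 0`, restrict to the shell `ρ ≤ |ξ| ≤ 2ρ` in Manfrin's condition: there the factor
`exp (η ρ² / |ξ|)` is at least `exp (η ρ / 2)`, which beats any `|f̂₁|²` decaying subexponentially.
A weight `φ (|ξ|) = o(|ξ|)`, such as `|ξ| ^ (1/s)` with `s > 1`, leaves room for such an `f̂₁`:
`|f̂₁|² = exp (-φ (|ξ|)) (1 + |ξ|) ^ (-(n + 1))` still has a finite `φ`-weighted integral. -/

open Asymptotics Bornology Metric Module Topology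

section DataClasses

variable {E : Type*} [NormedAddCommGroup E] [MeasurableSpace E]

/-- The integral whose finiteness for some `η > 0` puts the data with Fourier transforms
`F0`, `F1` in the class `𝒩_φ`; the Gevrey class of order `s` is the case `φ t = t ^ (1/s)`. -/
def weightedEnergy (μ : Measure E) (φ : ℝ → ℝ) (η : ℝ) (F0 F1 : E → ℂ) : ℝ≥0∞ :=
  ∫⁻ ξ, (‖ξ‖ₑ ^ 2 * ‖F0 ξ‖ₑ ^ 2 + ‖F1 ξ‖ₑ ^ 2) * ENNReal.ofReal (Real.exp (η * φ ‖ξ‖)) ∂μ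

/-- The integral over `{ρ ≤ |ξ|}` in Manfrin's condition: the data with Fourier transforms
`F0`, `F1` can lie in `ℬ_Δ` only if it stays bounded, for some `η > 0`, along some `ρ = ρ_j → ∞`. -/
def manfrinTail (μ : Measure E) (η ρ : ℝ) (F0 F1 : E → ℂ) : ℝ≥0∞ :=
  ∫⁻ ξ in {ξ : E | ρ ≤ ‖ξ‖}, (‖ξ‖ₑ ^ 4 * ‖F0 ξ‖ₑ ^ 2 + ‖ξ‖ₑ ^ 2 * ‖F1 ξ‖ₑ ^ 2) *
    ENNReal.ofReal (Real.exp (η * ρ ^ 2 / ‖ξ‖) / ρ ^ 2) ∂μ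

theorem lintegral_enorm_sq_le_weightedEnergy (μ : Measure E) {φ : ℝ → ℝ}
    (hφ : ∀ t, 0 ≤ t → 0 ≤ φ t) {η : ℝ} (hη : 0 ≤ η) (F0 F1 : E → ℂ) :
    ∫⁻ ξ, ‖F1 ξ‖ₑ ^ 2 ∂μ ≤ weightedEnergy μ φ η F0 F1 := by
  refine lintegral_mono fun ξ => ?_
  have one_le_weight : 1 ≤ ENNReal.ofReal (Real.exp (η * φ ‖ξ‖)) :=
    ENNReal.one_le_ofReal.2 (Real.one_le_exp (mul_nonneg hη (hφ _ (norm_nonneg ξ))))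
  exact le_add_self.trans (le_mul_of_one_le_right' one_le_weight)

end DataClasses

theorem exp_half_mul_le_sq_mul_exp_div {η r t : ℝ} (hη : 0 ≤ η) (hr : 0 < r) (hrt : r ≤ t)
    (htr : t ≤ 2 * r) :
    Real.exp (η / 2 * r) ≤ t ^ 2 * (Real.exp (η * r ^ 2 / t) / r ^ 2) := by
  have ht : 0 < t := hr.trans_le hrt
  have exponent_le : η / 2 * r ≤ η * r ^ 2 / t := by
    rw [le_div_iff₀ ht]
    calc η / 2 * r * t ≤ η / 2 * r * (2 * r) := by gcongr
      _ = η * r ^ 2 := by ring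
  have one_le_ratio : 1 ≤ t ^ 2 / r ^ 2 := (one_le_div (by positivity)).2 (by gcongr)
  calc Real.exp (η / 2 * r) ≤ Real.exp (η * r ^ 2 / t) := Real.exp_le_exp.2 exponent_le
    _ ≤ t ^ 2 / r ^ 2 * Real.exp (η * r ^ 2 / t) :=
      le_mul_of_one_le_left (Real.exp_pos _).le one_le_ratio
    _ = t ^ 2 * (Real.exp (η * r ^ 2 / t) / r ^ 2) := by ring

section ManfrinTail

variable {E : Type*} [NormedAddCommGroup E] [NormedSpace ℝ E]

theorem exists_ball_subset_shell [Nontrivial E] {r : ℝ} (hr : 0 ≤ r) :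
    ∃ x : E, ball x (r / 2) ⊆ {ξ | r ≤ ‖ξ‖ ∧ ‖ξ‖ ≤ 2 * r} := by
  obtain ⟨x, hx⟩ := exists_norm_eq E (c := 3 / 2 * r) (by positivity)
  refine ⟨x, fun ξ hξ => ?_⟩
  have norm_near := abs_le.1 ((abs_norm_sub_norm_le ξ x).trans (mem_ball_iff_norm.1 hξ).le)
  constructor <;> linarith [norm_near.1, norm_near.2]

variable [Nontrivial E] [MeasurableSpace E] [BorelSpace E] {μ : Measure E} [μ.IsAddHaarMeasure]

theorem exp_mul_measure_ball_le_manfrinTail {η c r : ℝ} (hη : 0 ≤ η) (hc : 0 ≤ c) (hr : 0 < r)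
    (F0 : E → ℂ) {F1 : E → ℂ} (hF1 : ∀ ξ, r ≤ ‖ξ‖ → Real.exp (-(c * ‖ξ‖)) ≤ ‖F1 ξ‖ ^ 2) :
    ENNReal.ofReal (Real.exp ((η / 2 - 2 * c) * r)) * μ (ball 0 (r / 2)) ≤
      manfrinTail μ η r F0 F1 := by
  obtain ⟨x, ball_subset⟩ := exists_ball_subset_shell (E := E) hr.le
  rw [← Measure.addHaar_ball_center μ x, ← setLIntegral_const]
  refine (setLIntegral_mono' measurableSet_ball fun ξ hξ => ?_).trans
    (lintegral_mono_set fun ξ hξ => (ball_subset hξ).1)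
  obtain ⟨hrξ, hξr⟩ := ball_subset hξ
  set W := Real.exp (η * r ^ 2 / ‖ξ‖) / r ^ 2
  have density_ge : Real.exp ((η / 2 - 2 * c) * r) ≤ ‖ξ‖ ^ 2 * ‖F1 ξ‖ ^ 2 * W :=
    calc Real.exp ((η / 2 - 2 * c) * r)
        = Real.exp (-(c * (2 * r))) * Real.exp (η / 2 * r) := by rw [← Real.exp_add]; ring_nf
      _ ≤ Real.exp (-(c * ‖ξ‖)) * Real.exp (η / 2 * r) := by gcongr
      _ ≤ ‖F1 ξ‖ ^ 2 * (‖ξ‖ ^ 2 * W) :=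
        mul_le_mul (hF1 ξ hrξ) (exp_half_mul_le_sq_mul_exp_div hη hr hrξ hξr)
          (Real.exp_pos _).le (sq_nonneg _)
      _ = ‖ξ‖ ^ 2 * ‖F1 ξ‖ ^ 2 * W := by ring
  calc ENNReal.ofReal (Real.exp ((η / 2 - 2 * c) * r))
      ≤ ENNReal.ofReal (‖ξ‖ ^ 2 * ‖F1 ξ‖ ^ 2 * W) := ENNReal.ofReal_le_ofReal density_ge
    _ = ‖ξ‖ₑ ^ 2 * ‖F1 ξ‖ₑ ^ 2 * ENNReal.ofReal W := by
      rw [ENNReal.ofReal_mul (by positivity), ENNReal.ofReal_mul (by positivity),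
        ENNReal.ofReal_pow (norm_nonneg _), ENNReal.ofReal_pow (norm_nonneg _), ofReal_norm,
        ofReal_norm]
    _ ≤ (‖ξ‖ₑ ^ 4 * ‖F0 ξ‖ₑ ^ 2 + ‖ξ‖ₑ ^ 2 * ‖F1 ξ‖ₑ ^ 2) * ENNReal.ofReal W := by
      gcongr
      exact le_add_self

theorem tendsto_manfrinTail_of_subexponential_decay {η : ℝ} (hη : 0 < η) (F0 : E → ℂ)
    {F1 : E → ℂ}
    (hF1 : ∀ c > 0, ∀ᶠ ξ in cobounded E, Real.exp (-(c * ‖ξ‖)) ≤ ‖F1 ξ‖ ^ 2) :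
    Tendsto (fun r => manfrinTail μ η r F0 F1) atTop (𝓝 ⊤) := by
  obtain ⟨R, -, F1_ge⟩ := hasBasis_cobounded_norm.eventually_iff.1 (hF1 (η / 8) (by positivity))
  have exp_tendsto : Tendsto (fun r => Real.exp ((η / 2 - 2 * (η / 8)) * r)) atTop atTop :=
    Real.tendsto_exp_atTop.comp (tendsto_id.const_mul_atTop (by linarith))
  have ball_pos : μ (ball 0 1) ≠ 0 := (measure_ball_pos μ 0 one_pos).ne'
  have lower_tendsto : Tendsto
      (fun r => ENNReal.ofReal (Real.exp ((η / 2 - 2 * (η / 8)) * r)) * μ (ball 0 1))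
      atTop (𝓝 ⊤) := by
    rw [← ENNReal.top_mul ball_pos]
    exact ENNReal.Tendsto.mul_const (ENNReal.tendsto_ofReal_atTop.comp exp_tendsto)
      (Or.inl ENNReal.top_ne_zero)
  refine tendsto_nhds_top_mono lower_tendsto ?_
  filter_upwards [eventually_ge_atTop 2, eventually_ge_atTop R] with r hr2 hrR
  calc _ ≤ ENNReal.ofReal (Real.exp ((η / 2 - 2 * (η / 8)) * r)) * μ (ball 0 (r / 2)) := by
        gcongr
        linarith
    _ ≤ manfrinTail μ η r F0 F1 :=
      exp_mul_measure_ball_le_manfrinTail hη.le (by positivity) (by linarith) F0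
        fun ξ hξ => F1_ge (hrR.trans hξ)

end ManfrinTail

section RadialProfile

variable {E : Type*} [NormedAddCommGroup E]

/-- The radial Fourier transform `F` with `|F ξ|² = exp (-ψ (|ξ|))`. -/
def radialProfile (ψ : ℝ → ℝ) (ξ : E) : ℂ := (Real.exp (-(ψ ‖ξ‖ / 2)) : ℝ)

theorem norm_radialProfile_sq (ψ : ℝ → ℝ) (ξ : E) :
    ‖radialProfile ψ ξ‖ ^ 2 = Real.exp (-ψ ‖ξ‖) := by
  rw [radialProfile, Complex.norm_real, Real.norm_of_nonneg (Real.exp_pos _).le, ← Real.exp_nat_mul]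
  push_cast
  ring_nf

theorem measurable_radialProfile [MeasurableSpace E] [OpensMeasurableSpace E] {ψ : ℝ → ℝ}
    (hψ : Measurable ψ) : Measurable (radialProfile ψ : E → ℂ) := by
  unfold radialProfile
  fun_prop

theorem eventually_exp_neg_mul_le_norm_radialProfile_sq {ψ : ℝ → ℝ} (hψ : ψ =o[atTop] id) {c : ℝ}
    (hc : 0 < c) : ∀ᶠ ξ in cobounded E, Real.exp (-(c * ‖ξ‖)) ≤ ‖radialProfile ψ ξ‖ ^ 2 := by
  filter_upwards [tendsto_norm_cobounded_atTop.eventually (hψ.bound hc)] with ξ hξ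
  rw [norm_radialProfile_sq, Real.exp_le_exp, neg_le_neg_iff]
  simpa only [id, norm_norm] using (Real.le_norm_self _).trans hξ

theorem weightedEnergy_zero_radialProfile [MeasurableSpace E] (μ : Measure E) (φ ψ : ℝ → ℝ)
    (η : ℝ) :
    weightedEnergy μ φ η 0 (radialProfile ψ) =
      ∫⁻ ξ, ENNReal.ofReal (Real.exp (η * φ ‖ξ‖ - ψ ‖ξ‖)) ∂μ := by
  refine lintegral_congr fun ξ => ?_
  rw [Pi.zero_apply, enorm_zero, zero_pow two_ne_zero, mul_zero, zero_add, ← ofReal_norm,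
    ← ENNReal.ofReal_pow (norm_nonneg _), norm_radialProfile_sq,
    ← ENNReal.ofReal_mul (Real.exp_pos _).le, ← Real.exp_add]
  ring_nf

variable [NormedSpace ℝ E] [FiniteDimensional ℝ E] [MeasurableSpace E] [BorelSpace E]

theorem weightedEnergy_zero_radialProfile_add_log_lt_top (μ : Measure E) [μ.IsAddHaarMeasure]
    (φ : ℝ → ℝ) (η : ℝ) {k : ℝ} (hk : finrank ℝ E < k) :
    weightedEnergy μ φ η 0 (radialProfile fun t => η * φ t + k * Real.log (1 + t)) < ⊤ := by
  rw [weightedEnergy_zero_radialProfile]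
  refine (lintegral_congr fun ξ => ?_).trans_lt (integrable_one_add_norm hk).lintegral_lt_top
  rw [Real.rpow_def_of_pos (by positivity)]
  ring_nf

end RadialProfile

theorem isLittleO_log_one_add_id_atTop : (fun t => Real.log (1 + t)) =o[atTop] (id : ℝ → ℝ) := by
  have one_add_isBigO : (fun t : ℝ => 1 + t) =O[atTop] (id : ℝ → ℝ) :=
    (isLittleO_const_id_atTop 1).isBigO.add (isBigO_refl _ _)
  exact (Real.isLittleO_log_id_atTop.comp_tendsto
    (tendsto_atTop_add_const_left _ 1 tendsto_id)).trans_isBigO one_add_isBigO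

theorem isLittleO_rpow_id_atTop {σ : ℝ} (hσ : σ < 1) :
    (fun t : ℝ => t ^ σ) =o[atTop] (id : ℝ → ℝ) := by
  refine (isLittleO_iff_tendsto' ?_).2 ?_
  · filter_upwards [eventually_gt_atTop 0] with t ht h0 using absurd h0 ht.ne'
  · refine (tendsto_rpow_neg_atTop (sub_pos.2 hσ)).congr' ?_
    filter_upwards [eventually_gt_atTop 0] with t ht
    rw [neg_sub, Real.rpow_sub_one ht.ne', id]

theorem gevrey_not_subset_manfrin_general {E : Type*} [NormedAddCommGroup E] [NormedSpace ℝ E]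
    [FiniteDimensional ℝ E] [Nontrivial E] [MeasurableSpace E] [BorelSpace E] (μ : Measure E)
    [μ.IsAddHaarMeasure] {φ : ℝ → ℝ} (hφ_meas : Measurable φ) (hφ_nonneg : ∀ t, 0 ≤ t → 0 ≤ φ t)
    (hφ : φ =o[atTop] id) :
    ∃ F0 F1 : E → ℂ, Measurable F0 ∧ Measurable F1 ∧
      (∫⁻ ξ, ENNReal.ofReal (1 + ‖ξ‖ ^ 2) * ‖F0 ξ‖ₑ ^ 2 ∂μ < ⊤) ∧
      (∫⁻ ξ, ‖F1 ξ‖ₑ ^ 2 ∂μ < ⊤) ∧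
      (∃ η > 0, weightedEnergy μ φ η F0 F1 < ⊤) ∧
      ∀ η > 0, Tendsto (fun r => manfrinTail μ η r F0 F1) atTop (𝓝 ⊤) := by
  set ψ : ℝ → ℝ := fun t => 1 * φ t + (finrank ℝ E + 1) * Real.log (1 + t)
  have ψ_isLittleO : ψ =o[atTop] id :=
    (hφ.const_mul_left 1).add (isLittleO_log_one_add_id_atTop.const_mul_left _)
  have energy_lt_top : weightedEnergy μ φ 1 0 (radialProfile ψ) < ⊤ :=
    weightedEnergy_zero_radialProfile_add_log_lt_top μ φ 1 (lt_add_one _)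
  refine ⟨0, radialProfile ψ, measurable_zero, measurable_radialProfile (by fun_prop), by simp,
    (lintegral_enorm_sq_le_weightedEnergy μ hφ_nonneg zero_le_one 0 _).trans_lt energy_lt_top,
    ⟨1, one_pos, energy_lt_top⟩, fun η hη => ?_⟩
  exact tendsto_manfrinTail_of_subexponential_decay hη 0
    fun c hc => eventually_exp_neg_mul_le_norm_radialProfile_sq ψ_isLittleO hc

/-- the non-inclusion `𝒢^s ⊄ ℬ_Δ` for `s > 1`: there is a pair of
Gevrey data of order `s` which does not belong to Manfrin's class, stated on the
Fourier side: `F0 = f̂_0`, `F1 = f̂_1`. -/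
theorem gevrey_not_subset_manfrin
    (n : ℕ) (hn : 1 ≤ n) (s : ℝ) (hs : 1 < s) :
    ∃ F0 F1 : EuclideanSpace ℝ (Fin n) → ℂ,
      Measurable F0 ∧ Measurable F1 ∧
      -- f_0 ∈ H¹(ℝⁿ), f_1 ∈ L²(ℝⁿ)
      (∫⁻ ξ, ENNReal.ofReal (1 + ‖ξ‖ ^ 2) * (‖F0 ξ‖₊ : ℝ≥0∞) ^ 2 < ⊤) ∧
      (∫⁻ ξ, (‖F1 ξ‖₊ : ℝ≥0∞) ^ 2 < ⊤) ∧
      -- (f_0, f_1) belongs to the Gevrey class 𝒢^s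
      (∃ η > (0:ℝ), ∫⁻ ξ,
        ((‖ξ‖₊ : ℝ≥0∞) ^ 2 * (‖F0 ξ‖₊ : ℝ≥0∞) ^ 2 + (‖F1 ξ‖₊ : ℝ≥0∞) ^ 2) *
          ENNReal.ofReal (Real.exp (η * ‖ξ‖ ^ (1/s))) < ⊤) ∧
      -- but (f_0, f_1) ∉ ℬ_Δ
      ((∀ ρ : ℕ → ℝ, (∀ j, 0 < ρ j) → Filter.Tendsto ρ Filter.atTop Filter.atTop →
          ∀ η' : ℝ, 0 < η' →
          (⨆ j : ℕ, ∫⁻ ξ in {ξ : EuclideanSpace ℝ (Fin n) | ρ j ≤ ‖ξ‖},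
            ((‖ξ‖₊ : ℝ≥0∞) ^ 4 * (‖F0 ξ‖₊ : ℝ≥0∞) ^ 2 +
             (‖ξ‖₊ : ℝ≥0∞) ^ 2 * (‖F1 ξ‖₊ : ℝ≥0∞) ^ 2) *
            ENNReal.ofReal (Real.exp (η' * (ρ j) ^ 2 / ‖ξ‖) / (ρ j) ^ 2)) = ⊤) ∨
        (∫⁻ ξ, ENNReal.ofReal ((1 + ‖ξ‖ ^ 2) ^ (2:ℝ)) * (‖F0 ξ‖₊ : ℝ≥0∞) ^ 2 = ⊤) ∨
        (∫⁻ ξ, ENNReal.ofReal (1 + ‖ξ‖ ^ 2) * (‖F1 ξ‖₊ : ℝ≥0∞) ^ 2 = ⊤)) := by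
  have : NeZero n := ⟨Nat.one_le_iff_ne_zero.1 hn⟩
  have weight_isLittleO : (fun t : ℝ => t ^ (1 / s)) =o[atTop] (id : ℝ → ℝ) :=
    isLittleO_rpow_id_atTop ((div_lt_one (one_pos.trans hs)).2 hs)
  obtain ⟨F0, F1, F0_meas, F1_meas, F0_mem, F1_mem, gevrey, tail_tendsto⟩ :=
    gevrey_not_subset_manfrin_general (volume : Measure (EuclideanSpace ℝ (Fin n)))
      (measurable_id.pow_const (1 / s)) (fun t ht => Real.rpow_nonneg ht _) weight_isLittleO
  refine ⟨F0, F1, F0_meas, F1_meas, F0_mem, F1_mem, gevrey, Or.inl fun ρ _ hρ η hη => ?_⟩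
  exact top_le_iff.1 (le_of_tendsto' ((tail_tendsto η hη).comp hρ)
    fun j => le_iSup (fun j => manfrinTail volume η (ρ j) F0 F1) j)
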